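/- arXiv:2004.06225 — 5 statements merged into one kernel-verified Lean document; each statement's English description precedes it below -/
import Mathlib

section
/- Let C be an abelian monoidal category with unit 𝟙 whose tensor product is additive in each variable. Let P be an ℕ-indexed chain complex over C with a degree 0 chain map μ_P : P ⟶ 𝟙 (𝟙 viewed as a complex concentrated in degree 0), and let Δ_P : P ⟶ P⊗P be a degree 0 chain map with (μ_P⊗μ_P)Δ_P = μ_P (via 𝟙⊗𝟙 ≅ 𝟙). Set α_P = (μ_P⊗1_P)Δ_P and β_P = (1_P⊗μ_P)Δ_P, regarded via the unitors as degree 0 chain maps P ⟶ P, and define Δ'_P = ((α_P − β_P)⊗1_P)Δ_P + Δ_P∘β_P. Then Δ'_P : P ⟶ P⊗P is a degree 0 chain map satisfying (μ_P⊗μ_P)Δ'_P = μ_P and (μ_P⊗1_P)Δ'_P = (1_P⊗μ_P)Δ'_P. -/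
/-!
STATEMENT 6: In an abelian monoidal category with tensor product additive in each
variable, a diagonal `Δ_P : P ⟶ P ⊗ P` lifting `μ_P` can be corrected to
`Δ'_P = ((α_P - β_P) ⊗ 1_P)Δ_P + Δ_P β_P`, which is again a chain map lifting `μ_P`
and whose two counit contractions agree (paper: Remark 4.5).
-/

open CategoryTheory CategoryTheory.Limits CategoryTheory.MonoidalCategory

universe v u

attribute [local instance] CategoryTheory.Abelian.hasFiniteBiproducts

variable {C : Type u} [Category.{v} C] [Abelian C] [MonoidalCategory C] [MonoidalPreadditive C]

/-- The degree `i` piece of the tensor product complex `E ⊗ F`: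
`(E ⊗ F)_i = ⨁_{j+k=i} E_j ⊗ F_k`. -/
noncomputable abbrev tOb (E F : ℕ → C) (i : ℕ) : C :=
  ⨁ (fun j : Fin (i + 1) => E j.1 ⊗ F (i - j.1))

/-- The differential of the tensor product complex `P ⊗ P`; on the summand
`P_j ⊗ P_k` it is `d ⊗ 1 + (-1)^j (1 ⊗ d)`. -/
noncomputable def tD (P : ℕ → C) (dP : ∀ i, P (i + 1) ⟶ P i) (i : ℕ) :
    tOb P P (i + 1) ⟶ tOb P P i :=
  biproduct.matrix fun (j : Fin (i + 2)) (k : Fin (i + 1)) =>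
    (if h : j.1 = k.1 + 1 then
        eqToHom (show P j.1 ⊗ P (i + 1 - j.1) = P (k.1 + 1) ⊗ P (i - k.1) by
          rw [h, show i + 1 - (k.1 + 1) = i - k.1 by omega]) ≫ (dP k.1 ▷ P (i - k.1))
      else 0) +
    (if h : j.1 = k.1 then
        ((-1 : ℤ) ^ k.1) •
          (eqToHom (show P j.1 ⊗ P (i + 1 - j.1) = P k.1 ⊗ P ((i - k.1) + 1) by
            rw [h, show i + 1 - k.1 = (i - k.1) + 1 by have := k.2; omega]) ≫
            (P k.1 ◁ dP (i - k.1)))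
      else 0)

/-- Contraction of the first tensor factor against a degree `m` morphism `π : E ⟶ 𝟙`
(with single component `π : E_m ⟶ 𝟙`), composed with the left unitor:
this is `(π ⊗ 1_F) : (E ⊗ F)_i ⟶ F_j` for `i = j + m` (no Koszul sign since
`1_F` has degree `0`). -/
noncomputable def cFst (E F : ℕ → C) {m : ℕ} (π : E m ⟶ 𝟙_ C) (i j : ℕ) (h : i = j + m) :
    tOb E F i ⟶ F j :=
  biproduct.π (fun a : Fin (i + 1) => E a.1 ⊗ F (i - a.1)) ⟨m, by omega⟩ ≫
    (π ▷ F (i - m)) ≫ (λ_ (F (i - m))).hom ≫ eqToHom (congrArg F (show i - m = j by omega))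

/-- Contraction of the second tensor factor against a degree `m` morphism `π : F ⟶ 𝟙`
(with single component `π : F_m ⟶ 𝟙`), composed with the right unitor:
this is `(1_E ⊗ π) : (E ⊗ F)_i ⟶ E j` for `i = j + m`, including the Koszul sign
`(-1)^{m·j}` coming from moving `π` past `E_j`. -/
noncomputable def cSnd (E F : ℕ → C) {m : ℕ} (π : F m ⟶ 𝟙_ C) (i j : ℕ) (h : i = j + m) :
    tOb E F i ⟶ E j :=
  ((-1 : ℤ) ^ (m * j)) •
    (biproduct.π (fun a : Fin (i + 1) => E a.1 ⊗ F (i - a.1)) ⟨j, by omega⟩ ≫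
      (E j ◁ (eqToHom (congrArg F (show i - j = m by omega)) ≫ π)) ≫ (ρ_ (E j)).hom)

/-- The augmentation `(μ ⊗ μ) : (P ⊗ P)_0 = P_0 ⊗ P_0 ⟶ 𝟙 ⊗ 𝟙 ≅ 𝟙`. -/
noncomputable def tAug (P : ℕ → C) (μ : P 0 ⟶ 𝟙_ C) : tOb P P 0 ⟶ 𝟙_ C :=
  biproduct.π (fun a : Fin 1 => P a.1 ⊗ P (0 - a.1)) ⟨0, Nat.one_pos⟩ ≫
    (μ ⊗ₘ μ) ≫ (λ_ (𝟙_ C)).hom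

/-- A degree `n` morphism of (ℕ-indexed, bounded below) complexes: a family of
components `E_i ⟶ F_j` for `i = j + n`. -/
abbrev DH (E F : ℕ → C) (n : ℤ) :=
  ∀ i j : ℕ, (i : ℤ) = (j : ℤ) + n → (E i ⟶ F j)

/-- Pointwise subtraction of degree `n` morphisms. -/
instance {E F : ℕ → C} {n : ℤ} : Sub (DH E F n) :=
  ⟨fun f g i j h => f i j h - g i j h⟩

/-- `∂(f) = d_F ∘ f - (-1)^n f ∘ d_E` for a degree `n` morphism `f`. -/
noncomputable def pdel {E F : ℕ → C} (dE : ∀ i, E (i + 1) ⟶ E i) (dF : ∀ i, F (i + 1) ⟶ F i)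
    {n m : ℤ} (hm : m = n + 1) (f : DH E F n) : DH E F m :=
  fun i j h =>
    f i (j + 1) (by push_cast; omega) ≫ dF j -
      (n.negOnePow : ℤ) •
        (match i, h with
          | 0, _ => 0
          | (k + 1), h => dE k ≫ f k j (by push_cast at h; omega))

/-- The degree `n` morphism `(f ⊗ 1_P - 1_P ⊗ f) ∘ Δ : P ⟶ P` associated to a degree `n`
cochain `f : P_n ⟶ 𝟙` and a diagonal `Δ : P ⟶ P ⊗ P`. -/
noncomputable def liftRHS (P : ℕ → C) (Δ : ∀ i, P i ⟶ tOb P P i) (n : ℕ) (f : P n ⟶ 𝟙_ C) :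
    DH P P (n : ℤ) :=
  fun i j h => Δ i ≫ cFst P P f i j (by omega) - Δ i ≫ cSnd P P f i j (by omega)

/-- The degree `0` morphism `(μ ⊗ 1_P - 1_P ⊗ μ) ∘ Δ : P ⟶ P`. -/
noncomputable def counitRHS (P : ℕ → C) (μ : P 0 ⟶ 𝟙_ C) (Δ : ∀ i, P i ⟶ tOb P P i) :
    DH P P (0 : ℤ) :=
  fun i j h => Δ i ≫ cFst P P μ i j (by omega) - Δ i ≫ cSnd P P μ i j (by omega)

/-- Two degree `k` morphisms `u, v : P ⟶ 𝟙` (identified with their single possibly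
nonzero components `P_k ⟶ 𝟙`) are homotopic iff `u - v = ∂(s)` for a degree `k-1`
morphism `s : P ⟶ 𝟙`; unravelled, `u - v = (-1)^k (s ∘ d_{k-1})`. -/
def homotopicToUnit (P : ℕ → C) (dP : ∀ i, P (i + 1) ⟶ P i) (k : ℕ)
    (u v : P k ⟶ 𝟙_ C) : Prop :=
  if hk : k = 0 then u = v
  else ∃ s : P (k - 1) ⟶ 𝟙_ C,
    u - v = ((-1 : ℤ) ^ k) •
      (eqToHom (congrArg P (show k = (k - 1) + 1 by omega)) ≫ dP (k - 1) ≫ s)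

/-- `ψf` is a homotopy lifting of `(f, Δ)`:  `∂(ψ_f) = (f ⊗ 1_P - 1_P ⊗ f)Δ` and
`μ ∘ ψ_f ∼ (-1)^{n+1} f ∘ ψ` for some degree `-1` morphism `ψ : P ⟶ P` with
`∂(ψ) = (μ ⊗ 1_P - 1_P ⊗ μ)Δ`. -/
def IsHomotopyLifting (P : ℕ → C) (dP : ∀ i, P (i + 1) ⟶ P i) (μ : P 0 ⟶ 𝟙_ C)
    (Δ : ∀ i, P i ⟶ tOb P P i) (n : ℕ) (hn : 1 ≤ n) (f : P n ⟶ 𝟙_ C)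
    (ψf : DH P P ((n : ℤ) - 1)) : Prop :=
  pdel dP dP (show (n : ℤ) = ((n : ℤ) - 1) + 1 by ring) ψf = liftRHS P Δ n f ∧
  ∃ ψ : DH P P (-1 : ℤ),
    pdel dP dP (show (0 : ℤ) = (-1 : ℤ) + 1 by ring) ψ = counitRHS P μ Δ ∧
    homotopicToUnit P dP (n - 1)
      (ψf (n - 1) 0 (by omega) ≫ μ)
      (((-1 : ℤ) ^ (n + 1)) • (ψ (n - 1) n (by omega) ≫ f))

/-- `Δ' = ((α_P - β_P) ⊗ 1_P) ∘ Δ + Δ ∘ β_P`, where `α_P = (μ ⊗ 1_P)Δ` and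
`β_P = (1_P ⊗ μ)Δ` (regarded via the unitors as degree `0` chain maps `P ⟶ P`). -/
noncomputable def DeltaPrime (P : ℕ → C) (μ : P 0 ⟶ 𝟙_ C) (Δ : ∀ i, P i ⟶ tOb P P i) (i : ℕ) :
    P i ⟶ tOb P P i :=
  Δ i ≫ biproduct.map (fun a : Fin (i + 1) =>
      ((Δ a.1 ≫ cFst P P μ a.1 a.1 rfl) - (Δ a.1 ≫ cSnd P P μ a.1 a.1 rfl)) ▷ P (i - a.1)) +
  (Δ i ≫ cSnd P P μ i i rfl) ≫ Δ i

/-- Transport along `a = b` in the second tensor factor is whiskered transport. -/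
lemma eqToHom_tensor_right {D : Type*} [Category D] [MonoidalCategory D] (X : D) (P : ℕ → D)
    {a b : ℕ} (h : a = b) (e : X ⊗ P a = X ⊗ P b) :
    eqToHom e = X ◁ eqToHom (congrArg P h) := by
  subst h; simp

lemma differential_comp_eqToHom {D : Type*} [Category D] (P : ℕ → D)
    (dP : ∀ i, P (i + 1) ⟶ P i) {a b : ℕ} (h : a = b) :
    dP a ≫ eqToHom (congrArg P h) = eqToHom (congrArg (fun n => P (n + 1)) h) ≫ dP b := by
  subst h; simp

lemma tD_comp_cFst (P : ℕ → C) (dP : ∀ i, P (i + 1) ⟶ P i) (μ : P 0 ⟶ 𝟙_ C)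
    (hμ : dP 0 ≫ μ = 0) (i : ℕ) :
    tD P dP i ≫ cFst P P μ i i rfl = cFst P P μ (i + 1) (i + 1) rfl ≫ dP i := by
  apply biproduct.hom_ext'
  rintro ⟨j, hj⟩
  simp only [tD, cFst, biproduct.matrix_π_assoc, biproduct.ι_desc_assoc, Category.assoc]
  by_cases h0 : j = 0
  · subst h0
    rw [biproduct.ι_π_self_assoc]
    simp [whisker_exchange_assoc]
  · rw [biproduct.ι_π_ne_assoc _ (by simpa [Fin.ext_iff] using h0)]
    by_cases h1 : j = 1
    · subst h1
      rw [zero_comp]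
      simp [← comp_whiskerRight_assoc, hμ]
    · rw [zero_comp]
      simp [h0, h1]

lemma tD_comp_cSnd (P : ℕ → C) (dP : ∀ i, P (i + 1) ⟶ P i) (μ : P 0 ⟶ 𝟙_ C)
    (hμ : dP 0 ≫ μ = 0) (i : ℕ) :
    tD P dP i ≫ cSnd P P μ i i rfl = cSnd P P μ (i + 1) (i + 1) rfl ≫ dP i := by
  apply biproduct.hom_ext'
  rintro ⟨j, hj⟩
  simp only [tD, cSnd, zero_mul, pow_zero, one_smul, biproduct.matrix_π_assoc,
    biproduct.ι_desc_assoc, Category.assoc]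
  by_cases h1 : j = i + 1
  · subst h1
    rw [biproduct.ι_π_self_assoc]
    simp only [↓reduceDIte, Nat.succ_ne_self, add_zero, Category.assoc]
    rw [eqToHom_tensor_right _ P (show i + 1 - (i + 1) = i - i by omega),
      ← rightUnitor_naturality, ← whisker_exchange_assoc,
      ← whiskerLeft_comp_assoc, eqToHom_trans_assoc]
  · rw [biproduct.ι_π_ne_assoc _ (by simpa [Fin.ext_iff] using h1)]
    by_cases h0 : j = i
    · subst h0
      have hz : dP (j - j) ≫ eqToHom (congrArg P (Nat.sub_self j)) ≫ μ = 0 := by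
        rw [← Category.assoc, differential_comp_eqToHom P dP (Nat.sub_self j), Category.assoc,
          hμ, comp_zero]
      simp only [h1, ↓reduceDIte, zero_add, Preadditive.zsmul_comp, Category.assoc, zero_comp]
      rw [← whiskerLeft_comp_assoc, hz]
      simp
    · simp [h0, h1]

lemma biproduct_map_whiskerRight_comp_tD (P : ℕ → C) (dP : ∀ i, P (i + 1) ⟶ P i)
    (f : ∀ i, P i ⟶ P i) (hf : ∀ i, f (i + 1) ≫ dP i = dP i ≫ f i) (i : ℕ) :
    biproduct.map (fun a : Fin (i + 1 + 1) => f a.1 ▷ P (i + 1 - a.1)) ≫ tD P dP i =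
      tD P dP i ≫ biproduct.map (fun a : Fin (i + 1) => f a.1 ▷ P (i - a.1)) := by
  apply biproduct.hom_ext'
  rintro ⟨j, hj⟩
  apply biproduct.hom_ext
  rintro ⟨k, hk⟩
  simp only [tD, Category.assoc, biproduct.ι_map_assoc, biproduct.matrix_π,
    biproduct.map_π, biproduct.matrix_π_assoc, biproduct.ι_desc, biproduct.ι_desc_assoc]
  by_cases h1 : j = k + 1
  · subst h1
    simp only [↓reduceDIte, Nat.succ_ne_self, add_zero, Category.assoc]
    rw [eqToHom_tensor_right _ P (show i + 1 - (k + 1) = i - k by omega),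
      ← whisker_exchange_assoc, ← comp_whiskerRight, ← comp_whiskerRight, hf]
  · by_cases h0 : j = k
    · subst h0
      simp only [↓reduceDIte, h1, zero_add, Preadditive.comp_zsmul, Preadditive.zsmul_comp,
        Category.assoc]
      rw [eqToHom_tensor_right _ P (show i + 1 - j = i - j + 1 by omega),
        ← whisker_exchange_assoc, ← whisker_exchange]
    · simp [h0, h1]

lemma biproduct_map_whiskerRight_comp_cFst (P : ℕ → C) (μ : P 0 ⟶ 𝟙_ C)
    (f : ∀ i, P i ⟶ P i) (hf : f 0 ≫ μ = 0) (i : ℕ) :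
    biproduct.map (fun a : Fin (i + 1) => f a.1 ▷ P (i - a.1)) ≫ cFst P P μ i i rfl = 0 := by
  rw [cFst, biproduct.map_π_assoc, ← comp_whiskerRight_assoc, hf,
    MonoidalPreadditive.zero_whiskerRight, zero_comp, comp_zero]

lemma biproduct_map_whiskerRight_comp_cSnd (P : ℕ → C) (μ : P 0 ⟶ 𝟙_ C)
    (f : ∀ i, P i ⟶ P i) (i : ℕ) :
    biproduct.map (fun a : Fin (i + 1) => f a.1 ▷ P (i - a.1)) ≫ cSnd P P μ i i rfl =
      cSnd P P μ i i rfl ≫ f i := by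
  simp only [cSnd, zero_mul, pow_zero, one_smul, biproduct.map_π_assoc, Category.assoc]
  rw [← whisker_exchange_assoc, rightUnitor_naturality]

lemma cFst_comp_augmentation (P : ℕ → C) (μ : P 0 ⟶ 𝟙_ C) :
    cFst P P μ 0 0 rfl ≫ μ = tAug P μ := by
  simp [cFst, tAug, MonoidalCategory.tensorHom_def]

lemma cSnd_comp_augmentation (P : ℕ → C) (μ : P 0 ⟶ 𝟙_ C) :
    cSnd P P μ 0 0 rfl ≫ μ = tAug P μ := by
  simp [cSnd, tAug, tensorHom_def', unitors_equal]

theorem stmt6 (P : ℕ → C) (dP : ∀ i, P (i + 1) ⟶ P i)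
    -- `P` is a chain complex
    (hPP : ∀ i, dP (i + 1) ≫ dP i = 0)
    -- `μ : P ⟶ 𝟙` is a degree 0 chain map
    (μ : P 0 ⟶ 𝟙_ C) (hμ : dP 0 ≫ μ = 0)
    -- `Δ : P ⟶ P ⊗ P` is a degree 0 chain map with `(μ ⊗ μ)Δ = μ`
    (Δ : ∀ i, P i ⟶ tOb P P i)
    (hΔd : ∀ i, Δ (i + 1) ≫ tD P dP i = dP i ≫ Δ i)
    (hΔμ : Δ 0 ≫ tAug P μ = μ) :
    -- `Δ'` is a degree 0 chain map,
    (∀ i, DeltaPrime P μ Δ (i + 1) ≫ tD P dP i = dP i ≫ DeltaPrime P μ Δ i) ∧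
    -- satisfying `(μ ⊗ μ)Δ' = μ`,
    (DeltaPrime P μ Δ 0 ≫ tAug P μ = μ) ∧
    -- and `(μ ⊗ 1_P)Δ' = (1_P ⊗ μ)Δ'`
    (∀ i, DeltaPrime P μ Δ i ≫ cFst P P μ i i rfl =
          DeltaPrime P μ Δ i ≫ cSnd P P μ i i rfl) := by
  set α : ∀ i, P i ⟶ P i := fun i => Δ i ≫ cFst P P μ i i rfl with hα
  set β : ∀ i, P i ⟶ P i := fun i => Δ i ≫ cSnd P P μ i i rfl with hβ
  have hαd (i : ℕ) : α (i + 1) ≫ dP i = dP i ≫ α i := by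
    simp only [hα, Category.assoc]
    rw [← tD_comp_cFst P dP μ hμ, ← Category.assoc, hΔd, Category.assoc]
  have hβd (i : ℕ) : β (i + 1) ≫ dP i = dP i ≫ β i := by
    simp only [hβ, Category.assoc]
    rw [← tD_comp_cSnd P dP μ hμ, ← Category.assoc, hΔd, Category.assoc]
  have hαμ : α 0 ≫ μ = μ := by
    simp only [hα, Category.assoc, cFst_comp_augmentation, hΔμ]
  have hβμ : β 0 ≫ μ = μ := by
    simp only [hβ, Category.assoc, cSnd_comp_augmentation, hΔμ]
  have hΔ' (i : ℕ) : DeltaPrime P μ Δ i =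
      Δ i ≫ biproduct.map (fun a : Fin (i + 1) => (α a.1 - β a.1) ▷ P (i - a.1)) +
        β i ≫ Δ i := rfl
  have hFst (i : ℕ) : DeltaPrime P μ Δ i ≫ cFst P P μ i i rfl = β i ≫ α i := by
    rw [hΔ', Preadditive.add_comp, Category.assoc,
      biproduct_map_whiskerRight_comp_cFst P μ (fun i => α i - β i)
        (by rw [Preadditive.sub_comp, hαμ, hβμ, sub_self]), comp_zero, zero_add, Category.assoc]
  have hSnd (i : ℕ) : DeltaPrime P μ Δ i ≫ cSnd P P μ i i rfl = β i ≫ α i := by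
    rw [hΔ', Preadditive.add_comp, Category.assoc,
      biproduct_map_whiskerRight_comp_cSnd P μ (fun i => α i - β i), ← Category.assoc,
      Category.assoc (β i)]
    change β i ≫ (α i - β i) + β i ≫ β i = _
    rw [Preadditive.comp_sub, sub_add_cancel]
  refine ⟨fun i => ?_, ?_, fun i => (hFst i).trans (hSnd i).symm⟩
  · rw [hΔ', hΔ', Preadditive.add_comp, Preadditive.comp_add, Category.assoc,
      biproduct_map_whiskerRight_comp_tD P dP (fun i => α i - β i)
        (fun i => by rw [Preadditive.sub_comp, Preadditive.comp_sub, hαd, hβd]),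
      ← Category.assoc (Δ (i + 1)), hΔd, Category.assoc, Category.assoc, hΔd,
      ← Category.assoc (β (i + 1)), hβd, Category.assoc]
  · rw [← cFst_comp_augmentation, ← Category.assoc, hFst, Category.assoc, hαμ, hβμ]
end

section
/- Let C be an abelian monoidal category with unit 𝟙 whose tensor product is additive in each variable, let (P,d,μ_P) be a projective resolution of 𝟙, and let Δ_P : P ⟶ P⊗P be a morphism of resolutions satisfying (μ_P⊗1_P)Δ_P = (1_P⊗μ_P)Δ_P (via the unitors). Let f : P ⟶ 𝟙 be a degree n cocycle and ψ_f a homotopy lifting of (f,Δ_P). Then there exists a homotopy lifting ψ'_f of (f,Δ_P) such that ψ'_f ∼ ψ_f and μ_P∘ψ'_f = 0. -/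
/-!
STATEMENT 8: if `(μ_P ⊗ 1_P)Δ_P = (1_P ⊗ μ_P)Δ_P` then any homotopy lifting `ψ_f` of
`(f, Δ_P)` is homotopic to a homotopy lifting `ψ'_f` with `μ_P ∘ ψ'_f = 0`
(second assertion of the paper's Remark 4.10).
-/

open CategoryTheory CategoryTheory.Limits CategoryTheory.MonoidalCategory

universe v u

attribute [local instance] CategoryTheory.Abelian.hasFiniteBiproducts

variable {C : Type u} [Category.{v} C] [Abelian C] [MonoidalCategory C] [MonoidalPreadditive C]

/-- A degree `-1` cycle `p` on an exact complex of projectives is, degree by degree, a boundary: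
`p = ∂(t)` with `t` of degree `-2`. -/
lemma exists_comp_eq_of_degree_neg_one_cycle (P : ℕ → C) (dP : ∀ i, P (i + 1) ⟶ P i)
    (hPP : ∀ i, dP (i + 1) ≫ dP i = 0) (hproj : ∀ i, Projective (P i))
    (hex : ∀ i, imageSubobject (dP (i + 1)) = kernelSubobject (dP i))
    (p : ∀ i, P i ⟶ P (i + 1)) (hp0 : p 0 ≫ dP 0 = 0)
    (hp : ∀ i, p (i + 1) ≫ dP (i + 1) + dP i ≫ p i = 0) :
    (∃ t : P 0 ⟶ P 2, t ≫ dP 1 = p 0) ∧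
    ∀ k, ∃ (t : P k ⟶ P (k + 2)) (t' : P (k + 1) ⟶ P (k + 3)),
      p (k + 1) = t' ≫ dP (k + 2) - dP k ≫ t := by
  have lift : ∀ k (g : P k ⟶ P (k + 1)), g ≫ dP k = 0 → ∃ t : P k ⟶ P (k + 2), t ≫ dP (k + 1) = g :=
    fun k g hg =>
      have hS := (ShortComplex.mk _ _ (hPP k)).exact_iff_image_eq_kernel.2 (hex k)
      have := hproj k
      ⟨hS.liftFromProjective g hg, hS.liftFromProjective_comp g hg⟩
  have step : ∀ k (t : P k ⟶ P (k + 2)), dP k ≫ p k = dP k ≫ t ≫ dP (k + 1) →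
      ∃ t' : P (k + 1) ⟶ P (k + 3), p (k + 1) = t' ≫ dP (k + 2) - dP k ≫ t := by
    intro k t ht
    obtain ⟨t', ht'⟩ := lift (k + 1) (p (k + 1) + dP k ≫ t) (by
        rw [Preadditive.add_comp, Category.assoc, ← ht, hp])
    exact ⟨t', by rw [ht']; abel⟩
  obtain ⟨t₀, ht₀⟩ := lift 0 (p 0) hp0
  have main : ∀ k, ∃ t : P k ⟶ P (k + 2), dP k ≫ p k = dP k ≫ t ≫ dP (k + 1) := by
    intro k
    induction k with
    | zero => exact ⟨t₀, by rw [ht₀]⟩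
    | succ k ih =>
      obtain ⟨t, ht⟩ := ih
      obtain ⟨t', ht'⟩ := step k t ht
      refine ⟨t', ?_⟩
      rw [ht', Preadditive.comp_sub, ← Category.assoc (dP (k + 1)) (dP k), hPP, zero_comp,
        sub_zero]
  refine ⟨⟨t₀, ht₀⟩, fun k => ?_⟩
  obtain ⟨t, ht⟩ := main k
  exact ⟨t, step k t ht⟩

lemma pdel_zero_left {E F : ℕ → C} (dE : ∀ i, E (i + 1) ⟶ E i) (dF : ∀ i, F (i + 1) ⟶ F i)
    {n m : ℤ} (hm : m = n + 1) (f : DH E F n) (j : ℕ) (h : ((0 : ℕ) : ℤ) = (j : ℤ) + m) :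
    pdel dE dF hm f 0 j h = f 0 (j + 1) (by push_cast at h ⊢; omega) ≫ dF j := by
  simp [pdel]

lemma pdel_succ_left {E F : ℕ → C} (dE : ∀ i, E (i + 1) ⟶ E i) (dF : ∀ i, F (i + 1) ⟶ F i)
    {n m : ℤ} (hm : m = n + 1) (f : DH E F n) (i j : ℕ)
    (h : ((i + 1 : ℕ) : ℤ) = (j : ℤ) + m) :
    pdel dE dF hm f (i + 1) j h =
      f (i + 1) (j + 1) (by push_cast at h ⊢; omega) ≫ dF j -
        (n.negOnePow : ℤ) • (dE i ≫ f i j (by push_cast at h; omega)) := rfl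

/-- Adding a boundary does not change `∂`. -/
lemma pdel_add_pdel {E F : ℕ → C} (dE : ∀ i, E (i + 1) ⟶ E i) (dF : ∀ i, F (i + 1) ⟶ F i)
    (hE : ∀ i, dE (i + 1) ≫ dE i = 0) (hF : ∀ i, dF (i + 1) ≫ dF i = 0)
    {n m l : ℤ} (hm : m = n + 1) (hl : l = m + 1) (g : DH E F m) (s : DH E F n) :
    pdel dE dF hl (fun i j h => g i j h + pdel dE dF hm s i j h) = pdel dE dF hl g := by
  funext i j h
  rcases i with _ | _ | i
  · simp [pdel_zero_left, hF]
  · subst hm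
    simp [pdel_zero_left, pdel_succ_left, hF, Int.negOnePow_succ, Preadditive.comp_add]
  · subst hm
    have h1 : dE (i + 1) ≫ dE i ≫ s i j (by push_cast at h; omega) = 0 := by
      rw [← Category.assoc, hE, zero_comp]
    simp [pdel_succ_left, hF, Int.negOnePow_succ, Preadditive.comp_add, h1]

theorem stmt8 (P : ℕ → C) (dP : ∀ i, P (i + 1) ⟶ P i)
    -- `(P, dP, μ)` is a projective resolution of `𝟙`
    (hPP : ∀ i, dP (i + 1) ≫ dP i = 0)
    (hproj : ∀ i, Projective (P i))
    (μ : P 0 ⟶ 𝟙_ C) (hμd : dP 0 ≫ μ = 0) (hepi : Epi μ)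
    (hex0 : imageSubobject (dP 0) = kernelSubobject μ)
    (hex : ∀ i, imageSubobject (dP (i + 1)) = kernelSubobject (dP i))
    -- `Δ : P ⟶ P ⊗ P` is a morphism of resolutions
    (Δ : ∀ i, P i ⟶ tOb P P i)
    (hΔd : ∀ i, Δ (i + 1) ≫ tD P dP i = dP i ≫ Δ i)
    (hΔμ : Δ 0 ≫ tAug P μ = μ)
    -- with `(μ ⊗ 1_P)Δ = (1_P ⊗ μ)Δ` (via the unitors)
    (hΔcontr : ∀ i, Δ i ≫ cFst P P μ i i rfl = Δ i ≫ cSnd P P μ i i rfl)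
    -- `f` is a degree `n` cocycle
    (n : ℕ) (hn : 1 ≤ n) (f : P n ⟶ 𝟙_ C) (hf : dP n ≫ f = 0)
    -- `ψf` is a homotopy lifting of `(f, Δ)`
    (ψf : DH P P ((n : ℤ) - 1))
    (h1 : IsHomotopyLifting P dP μ Δ n hn f ψf) :
    -- then there is a homotopy lifting `ψ'f` of `(f, Δ)` with `ψ'f ∼ ψf` and `μ ∘ ψ'f = 0`
    ∃ ψ'f : DH P P ((n : ℤ) - 1),
      IsHomotopyLifting P dP μ Δ n hn f ψ'f ∧
      (∃ s : DH P P ((n : ℤ) - 2),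
        ψ'f - ψf = pdel dP dP (show (n : ℤ) - 1 = ((n : ℤ) - 2) + 1 by ring) s) ∧
      ψ'f (n - 1) 0 (by omega) ≫ μ = 0 := by
  have hcounit : counitRHS P μ Δ = fun i j _ => 0 := by
    funext i j h
    obtain rfl : i = j := by omega
    exact sub_eq_zero.2 (hΔcontr i)
  obtain ⟨hlift, ψ, hψ, hhtpy⟩ := h1
  rw [hcounit] at hψ
  obtain ⟨⟨t₀, ht₀⟩, ht⟩ := exists_comp_eq_of_degree_neg_one_cycle P dP hPP hproj hex
    (fun i => ψ i (i + 1) (by push_cast; ring))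
    (by simpa [pdel_zero_left] using congrFun (congrFun (congrFun hψ 0) 0) rfl)
    (fun i => by
      simpa [pdel_succ_left] using congrFun (congrFun (congrFun hψ (i + 1)) (i + 1)) (by simp))
  -- It suffices to correct `ψf` by a boundary so that the augmentation kills it.
  suffices hs : ∃ s : DH P P ((n : ℤ) - 2), (ψf (n - 1) 0 (by omega) +
      pdel dP dP (show (n : ℤ) - 1 = ((n : ℤ) - 2) + 1 by ring) s (n - 1) 0 (by omega)) ≫ μ = 0 by
    obtain ⟨s, hs⟩ := hs
    refine ⟨fun i j h => ψf i j h + pdel dP dP (by ring) s i j h, ⟨?_, fun _ _ _ => 0, ?_, ?_⟩,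
      ⟨s, ?_⟩, hs⟩
    · rw [pdel_add_pdel dP dP hPP hPP, hlift]
    · rw [hcounit]
      funext i j h
      cases i <;> simp [pdel_zero_left, pdel_succ_left]
    · simp only [hs, homotopicToUnit]
      split_ifs
      · simp
      · exact ⟨0, by simp⟩
    · funext i j h
      exact add_sub_cancel_left _ _
  obtain _ | _ | k := n
  · omega
  · refine ⟨fun _ _ _ => 0, ?_⟩
    have hu : ψf 0 0 (by simp) ≫ μ = ((-1 : ℤ) ^ 2) • (ψ 0 1 (by simp) ≫ f) := hhtpy
    have h0 : ψ 0 1 (by simp) ≫ f = 0 := by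
      change t₀ ≫ dP 1 = ψ 0 1 _ at ht₀
      rw [← ht₀, Category.assoc, hf, comp_zero]
    change (ψf 0 0 _ + pdel dP dP _ _ 0 0 _) ≫ μ = 0
    rw [pdel_zero_left, zero_comp, add_zero, hu, h0, smul_zero]
  · obtain ⟨t, t', htt⟩ := ht k
    change ψ (k + 1) (k + 2) _ = _ at htt
    obtain ⟨s, hs⟩ : ∃ s : P k ⟶ 𝟙_ C,
        ψf (k + 1) 0 (by push_cast; ring) ≫ μ -
          ((-1 : ℤ) ^ (k + 3)) • (ψ (k + 1) (k + 2) (by push_cast; ring) ≫ f) =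
        ((-1 : ℤ) ^ (k + 1)) • (𝟙 _ ≫ dP k ≫ s) := by
      simpa [homotopicToUnit] using hhtpy
    obtain ⟨r, hr⟩ : ∃ r : P k ⟶ 𝟙_ C, ψf (k + 1) 0 (by push_cast; ring) ≫ μ = dP k ≫ r := by
      refine ⟨((-1 : ℤ) ^ (k + 1)) • s - ((-1 : ℤ) ^ (k + 3)) • (t ≫ f), ?_⟩
      rw [sub_eq_iff_eq_add.1 hs, htt, Preadditive.sub_comp, Category.assoc, Category.assoc, hf]
      simp [sub_eq_add_neg]
    have hsign : ((((k + 2 : ℕ) : ℤ) - 2).negOnePow : ℤ) = (-1) ^ k := by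
      simp [Int.negOnePow_def]
    refine ⟨fun i j h => match j, h with
      | 0, h => eqToHom (congrArg P (by push_cast at h; omega)) ≫
          (((-1 : ℤ) ^ k) • Projective.factorThru r μ)
      | _ + 1, _ => 0, ?_⟩
    change (ψf (k + 1) 0 _ + pdel dP dP _ _ (k + 1) 0 _) ≫ μ = 0
    rw [pdel_succ_left, Preadditive.add_comp, hr, hsign]
    simp [smul_smul, ← mul_pow]
end

section
/- Let C be an abelian monoidal category with unit 𝟙 whose tensor product is additive in each variable. Let P be an ℕ-indexed chain complex over C and Δ_P : P ⟶ P⊗P a degree 0 chain map. Let f : P ⟶ 𝟙 be a degree m cocycle and g : P ⟶ 𝟙 a degree n cocycle, with m, n ≥ 1, and let ψ_f, ψ_g : P ⟶ P be morphisms of degrees m−1 and n−1 respectively satisfying ∂(ψ_f) = (f⊗1_P − 1_P⊗f)Δ_P and ∂(ψ_g) = (g⊗1_P − 1_P⊗g)Δ_P. Then the degree (m+n−1) morphism [f,g] := f∘ψ_g − (−1)^{(m−1)(n−1)} g∘ψ_f : P ⟶ 𝟙 is a cocycle, i.e. its only nonzero component P_{m+n−1} ⟶ 𝟙 composed with d_{m+n−1}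 : P_{m+n} ⟶ P_{m+n−1} is zero. -/
/-!
STATEMENT 9: the cochain-level bracket `[f,g] = f ψ_g - (-1)^{(m-1)(n-1)} g ψ_f` of two
cocycles `f, g : P ⟶ 𝟙` is again a cocycle (paper: the definition (4.13)).
-/

open CategoryTheory CategoryTheory.Limits CategoryTheory.MonoidalCategory

universe v u

attribute [local instance] CategoryTheory.Abelian.hasFiniteBiproducts

variable {C : Type u} [Category.{v} C] [Abelian C] [MonoidalCategory C] [MonoidalPreadditive C]

/-- Contracting the left factor by `u` and then applying `w` agrees with contracting the right
factor by `w` and then applying `u`. -/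
lemma whiskerRight_leftUnitor_comp {A B : C} (u : A ⟶ 𝟙_ C) (w : B ⟶ 𝟙_ C) :
    u ▷ B ≫ (λ_ B).hom ≫ w = A ◁ w ≫ (ρ_ A).hom ≫ u := by
  rw [← leftUnitor_naturality, ← rightUnitor_naturality, ← whisker_exchange_assoc,
    unitors_equal]

/-- `f ∘ (g ⊗ 1) = (-1)^{mn} g ∘ (1 ⊗ f)` for `f`, `g` of degrees `m`, `n`. -/
lemma cFst_comp_eq_smul_cSnd_comp (P : ℕ → C) {m n : ℕ} (f : P m ⟶ 𝟙_ C) (g : P n ⟶ 𝟙_ C)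
    (i : ℕ) (h : i = m + n) (h' : i = n + m) :
    cFst P P g i m h ≫ f = ((-1 : ℤ) ^ (m * n)) • (cSnd P P f i n h' ≫ g) := by
  simp only [cFst, cSnd, Preadditive.zsmul_comp, smul_smul, ← mul_pow, neg_mul_neg, one_mul,
    one_pow, one_smul, Category.assoc, whiskerRight_leftUnitor_comp]

/-- If `∂(ψ) = (g ⊗ 1 - 1 ⊗ g)Δ` and `f` is a cocycle, then `f ∘ ψ ∘ d` is, up to sign, the
difference of the two cup products of `f` and `g`. -/
lemma d_comp_lift_comp (P : ℕ → C) (dP : ∀ i, P (i + 1) ⟶ P i) (Δ : ∀ i, P i ⟶ tOb P P i)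
    {m n : ℕ} (f : P m ⟶ 𝟙_ C) (hf : dP m ≫ f = 0) (g : P n ⟶ 𝟙_ C)
    (ψ : DH P P ((n : ℤ) - 1))
    (hψ : pdel dP dP (show (n : ℤ) = ((n : ℤ) - 1) + 1 by ring) ψ = liftRHS P Δ n g)
    (k : ℕ) (hk : (k : ℤ) = m + ((n : ℤ) - 1)) (h : k + 1 = m + n) :
    dP k ≫ ψ k m hk ≫ f =
      ((-1 : ℤ) ^ n) • (Δ (k + 1) ≫ cFst P P g (k + 1) m h ≫ f -
        Δ (k + 1) ≫ cSnd P P g (k + 1) m h ≫ f) := by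
  have key := congrArg (· ≫ f) (congrFun (congrFun (congrFun hψ (k + 1)) m) (by omega))
  simp only [pdel, liftRHS, Preadditive.sub_comp, Category.assoc, hf, comp_zero, zero_sub,
    Preadditive.zsmul_comp, Int.negOnePow_sub, Int.negOnePow_one] at key
  rw [← key, smul_neg, smul_smul, ← neg_smul]
  have sign : -((-1 : ℤ) ^ n * (((n : ℤ).negOnePow * -1 : ℤˣ) : ℤ)) = 1 := by
    simp [Int.negOnePow_def, ← mul_pow]
  rw [sign, one_smul]

theorem stmt9 (P : ℕ → C) (dP : ∀ i, P (i + 1) ⟶ P i)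
    -- `P` is a chain complex
    (hPP : ∀ i, dP (i + 1) ≫ dP i = 0)
    -- `Δ : P ⟶ P ⊗ P` is a degree 0 chain map
    (Δ : ∀ i, P i ⟶ tOb P P i)
    (hΔd : ∀ i, Δ (i + 1) ≫ tD P dP i = dP i ≫ Δ i)
    -- `f` is a degree `m` cocycle and `g` a degree `n` cocycle, `m, n ≥ 1`
    (m n : ℕ) (hm : 1 ≤ m) (hn : 1 ≤ n)
    (f : P m ⟶ 𝟙_ C) (hf : dP m ≫ f = 0)
    (g : P n ⟶ 𝟙_ C) (hg : dP n ≫ g = 0)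
    -- `∂(ψf) = (f ⊗ 1_P - 1_P ⊗ f)Δ` and `∂(ψg) = (g ⊗ 1_P - 1_P ⊗ g)Δ`
    (ψf : DH P P ((m : ℤ) - 1))
    (hψf : pdel dP dP (show (m : ℤ) = ((m : ℤ) - 1) + 1 by ring) ψf = liftRHS P Δ m f)
    (ψg : DH P P ((n : ℤ) - 1))
    (hψg : pdel dP dP (show (n : ℤ) = ((n : ℤ) - 1) + 1 by ring) ψg = liftRHS P Δ n g) :
    -- then `[f,g] = f ψ_g - (-1)^{(m-1)(n-1)} g ψ_f : P_{m+n-1} ⟶ 𝟙` is a cocycle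
    dP (m + n - 1) ≫
      (ψg (m + n - 1) m (by omega) ≫ f -
        ((-1 : ℤ) ^ ((m - 1) * (n - 1))) • (ψf (m + n - 1) n (by omega) ≫ g)) = 0 := by
  obtain ⟨a, rfl⟩ := Nat.exists_eq_add_of_le' hm
  obtain ⟨b, rfl⟩ := Nat.exists_eq_add_of_le' hn
  rw [Preadditive.comp_sub, Preadditive.comp_zsmul,
    d_comp_lift_comp P dP Δ f hf g ψg hψg _ _ (by omega),
    d_comp_lift_comp P dP Δ g hg f ψf hψf _ _ (by omega),
    cFst_comp_eq_smul_cSnd_comp P f g _ _ (by omega),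
    cFst_comp_eq_smul_cSnd_comp P g f _ _ (by omega)]
  simp only [Preadditive.comp_zsmul, Nat.add_sub_cancel]
  generalize Δ _ ≫ cSnd P P f _ _ _ ≫ g = X
  generalize Δ _ ≫ cSnd P P g _ _ _ ≫ f = Y
  rcases Nat.even_or_odd a with ha | ha <;> rcases Nat.even_or_odd b with hb | hb <;>
    simp [pow_add, pow_mul, mul_add, add_mul, ha.neg_one_pow, hb.neg_one_pow] <;>
    abel
end

section
/- Let C be an abelian monoidal category with unit 𝟙 whose tensor product is additive in each variable, let (P,d,μ_P) be a projective resolution of 𝟙, Δ_P : P ⟶ P⊗P a morphism of resolutions, f a degree m cocycle and g a degree n cocycle (m, n ≥ 1). If ψ_f, ψ'_f are homotopy liftings of (f,Δ_P) and ψ_g, ψ'_g are homotopy liftings of (g,Δ_P), then the cocycles f∘ψ_g − (−1)^{(m−1)(n−1)} g∘ψ_f and f∘ψ'_g − (−1)^{(m−1)(n−1)} g∘ψ'_f differ by a coboundary; hence the cohomology class of the bracket [f,g] does not depend on the choice of homotopy liftings. -/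
/-!
STATEMENT 10: the cohomology class of the bracket
`[f,g] = f ψ_g - (-1)^{(m-1)(n-1)} g ψ_f` does not depend on the choice of the homotopy
liftings `ψ_f, ψ_g` (well-definedness asserted after (4.13) in the paper).
-/

open CategoryTheory CategoryTheory.Limits CategoryTheory.MonoidalCategory

universe v u

attribute [local instance] CategoryTheory.Abelian.hasFiniteBiproducts

variable {C : Type u} [Category.{v} C] [Abelian C] [MonoidalCategory C] [MonoidalPreadditive C]

/-- A morphism from a projective object which is killed by `k` factors through `d`,
if `d` and `k` are exact. -/
theorem exists_factor_of_image_eq_kernel {C : Type u} [Category.{v} C] [Abelian C]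
    {A B D Q : C} [Projective Q] (d : A ⟶ B) (k : B ⟶ D)
    (hdk : d ≫ k = 0) (hex : imageSubobject d = kernelSubobject k) (φ : Q ⟶ B)
    (hφ : φ ≫ k = 0) : ∃ h : Q ⟶ A, φ = h ≫ d := by
  have hS : (ShortComplex.mk d k hdk).Exact :=
    (ShortComplex.mk d k hdk).exact_iff_image_eq_kernel.2 hex
  exact ⟨hS.liftFromProjective φ hφ, (hS.liftFromProjective_comp φ hφ).symm⟩

/-- Let `D` be a family commuting, up to the scalar `ε`, with the differential `e` of a complex of
projectives and the differential `δ` of an exact complex. If `D 0` is a boundary after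
precomposition with `e 0`, then composing `D` with a cocycle in positive degree
yields a coboundary. -/
theorem exists_comp_cocycle_eq_coboundary {C : Type u} [Category.{v} C] [Abelian C]
    {X Y : ℕ → C}
    (e : ∀ i, X (i + 1) ⟶ X i) (δ : ∀ i, Y (i + 1) ⟶ Y i)
    (he : ∀ i, e (i + 1) ≫ e i = 0) (hδ : ∀ i, δ (i + 1) ≫ δ i = 0)
    (hX : ∀ i, Projective (X i))
    (hex : ∀ i, imageSubobject (δ (i + 1)) = kernelSubobject (δ i))
    (D : ∀ i, X i ⟶ Y i) (ε : ℤ)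
    (hD : ∀ i, D (i + 1) ≫ δ i = ε • (e i ≫ D i))
    (hD₀ : ∃ h : X 0 ⟶ Y 1, e 0 ≫ D 0 = e 0 ≫ h ≫ δ 0)
    (i : ℕ) {Z : C} (f : Y (i + 1) ⟶ Z) (hf : δ (i + 1) ≫ f = 0) :
    ∃ v : X i ⟶ Z, D (i + 1) ≫ f = e i ≫ v := by
  have step (j : ℕ) (h : X j ⟶ Y (j + 1)) (hj : e j ≫ D j = e j ≫ h ≫ δ j) :
      ∃ h' : X (j + 1) ⟶ Y (j + 2), D (j + 1) - ε • (e j ≫ h) = h' ≫ δ (j + 1) := by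
    have := hX (j + 1)
    refine exists_factor_of_image_eq_kernel _ _ (hδ j) (hex j) _ ?_
    simp [Preadditive.sub_comp, hD, hj]
  have homotopy (j : ℕ) : ∃ h : X j ⟶ Y (j + 1), e j ≫ D j = e j ≫ h ≫ δ j := by
    induction j with
    | zero => exact hD₀
    | succ j ih =>
      obtain ⟨h, hj⟩ := ih
      obtain ⟨h', hj'⟩ := step j h hj
      refine ⟨h', ?_⟩
      simp [← hj', Preadditive.comp_sub, reassoc_of% (he j)]
  obtain ⟨h, hi⟩ := homotopy i
  obtain ⟨h', hi'⟩ := step i h hi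
  refine ⟨ε • (h ≫ f), ?_⟩
  rw [sub_eq_iff_eq_add.1 hi']
  simp [Preadditive.add_comp, hf]

/-- Two degree `-1` morphisms with the same boundary induce, after composition with a cocycle `g`
of degree `n + 1`, cochains which differ by `s ≫ μ` for some `s` killed by the differential. -/
theorem exists_comp_sub_comp_eq_comp_augmentation {C : Type u} [Category.{v} C] [Abelian C]
    [MonoidalCategory C] (P : ℕ → C) (dP : ∀ i, P (i + 1) ⟶ P i)
    (hPP : ∀ i, dP (i + 1) ≫ dP i = 0) (hproj : ∀ i, Projective (P i))
    (μ : P 0 ⟶ 𝟙_ C) (hepi : Epi μ)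
    (hex : ∀ i, imageSubobject (dP (i + 1)) = kernelSubobject (dP i))
    (n : ℕ) (g : P (n + 1) ⟶ 𝟙_ C) (hg : dP (n + 1) ≫ g = 0)
    (ψ ψ' : DH P P (-1))
    (h : pdel dP dP (show (0 : ℤ) = (-1 : ℤ) + 1 by ring) ψ =
      pdel dP dP (show (0 : ℤ) = (-1 : ℤ) + 1 by ring) ψ') :
    ∃ s : P n ⟶ P 0, dP n ≫ s = 0 ∧
      ψ n (n + 1) (by push_cast; ring) ≫ g - ψ' n (n + 1) (by push_cast; ring) ≫ g = s ≫ μ := by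
  have h₀ := congrFun (congrFun (congrFun h 0) 0) (by simp)
  simp only [pdel, smul_zero, sub_zero] at h₀
  have := hproj 0
  obtain ⟨t, ht⟩ := exists_factor_of_image_eq_kernel _ _ (hPP 0) (hex 0)
    (ψ 0 1 (by simp) - ψ' 0 1 (by simp)) (by rw [Preadditive.sub_comp, h₀, sub_self])
  cases n with
  | zero =>
    refine ⟨0, by simp, ?_⟩
    rw [← Preadditive.sub_comp]
    exact (congrArg (· ≫ g) ht).trans (by simp [hg])
  | succ k =>
    obtain ⟨v, hv⟩ := exists_comp_cocycle_eq_coboundary (Y := fun i => P (i + 1)) dP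
      (fun i => dP (i + 1)) hPP (fun i => hPP (i + 1)) hproj (fun i => hex (i + 1))
      (fun i => ψ i (i + 1) (by push_cast; ring) - ψ' i (i + 1) (by push_cast; ring)) (-1)
      (fun i => by
        have hi := congrFun (congrFun (congrFun h (i + 1)) (i + 1)) (by simp)
        simp only [pdel, Int.negOnePow_neg, Int.negOnePow_one, Units.val_neg, Units.val_one,
          neg_smul, one_smul, sub_neg_eq_add] at hi
        simp only [Preadditive.sub_comp, Preadditive.comp_sub, neg_smul, one_smul]
        rw [← sub_eq_zero] at hi ⊢
        rw [← hi]
        abel)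
      ⟨t, by rw [← ht]⟩ k g hg
    have := hproj k
    refine ⟨dP k ≫ Projective.factorThru v μ, by rw [reassoc_of% (hPP k), zero_comp], ?_⟩
    rw [Category.assoc, Projective.factorThru_comp, ← hv, Preadditive.sub_comp]

/-- If `u` and `v` are homotopic, then `u - v` is `s ≫ μ` for some `s` killed by the
differential. -/
theorem homotopicToUnit.exists_sub_eq_comp_augmentation {C : Type u} [Category.{v} C] [Abelian C]
    [MonoidalCategory C] {P : ℕ → C} {dP : ∀ i, P (i + 1) ⟶ P i}
    (hPP : ∀ i, dP (i + 1) ≫ dP i = 0) (hproj : ∀ i, Projective (P i))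
    (μ : P 0 ⟶ 𝟙_ C) (hepi : Epi μ) {k : ℕ} {u v : P k ⟶ 𝟙_ C}
    (h : homotopicToUnit P dP k u v) :
    ∃ s : P k ⟶ P 0, dP k ≫ s = 0 ∧ u - v = s ≫ μ := by
  cases k with
  | zero =>
    rw [homotopicToUnit, dif_pos rfl] at h
    exact ⟨0, by simp, by simp [h]⟩
  | succ k =>
    rw [homotopicToUnit, dif_neg k.succ_ne_zero] at h
    obtain ⟨s, hs⟩ := h
    change u - v = (-1 : ℤ) ^ (k + 1) • (𝟙 _ ≫ dP k ≫ s) at hs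
    have := hproj k
    refine ⟨(-1 : ℤ) ^ (k + 1) • (dP k ≫ Projective.factorThru (P := P k) s μ), ?_, ?_⟩
    · rw [Linear.comp_smul, reassoc_of% (hPP k), zero_comp, smul_zero]
    · rw [hs, Linear.smul_comp, Category.assoc, Projective.factorThru_comp, Category.id_comp]

/-- The compositions of a cocycle `f` with two homotopy liftings of a cocycle `g` differ by a
coboundary. -/
theorem IsHomotopyLifting.exists_comp_sub_comp_eq_coboundary {C : Type u} [Category.{v} C]
    [Abelian C] [MonoidalCategory C] (P : ℕ → C) (dP : ∀ i, P (i + 1) ⟶ P i)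
    (hPP : ∀ i, dP (i + 1) ≫ dP i = 0) (hproj : ∀ i, Projective (P i))
    (μ : P 0 ⟶ 𝟙_ C) (hμd : dP 0 ≫ μ = 0) (hepi : Epi μ)
    (hex0 : imageSubobject (dP 0) = kernelSubobject μ)
    (hex : ∀ i, imageSubobject (dP (i + 1)) = kernelSubobject (dP i))
    (Δ : ∀ i, P i ⟶ tOb P P i) (m n : ℕ) (hm : 1 ≤ m) (hn : 1 ≤ n)
    (f : P m ⟶ 𝟙_ C) (hf : dP m ≫ f = 0) (g : P n ⟶ 𝟙_ C) (hg : dP n ≫ g = 0)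
    (ψ ψ' : DH P P ((n : ℤ) - 1))
    (hψ : IsHomotopyLifting P dP μ Δ n hn g ψ) (hψ' : IsHomotopyLifting P dP μ Δ n hn g ψ')
    (a b : ℕ) (hab : a = b + 1) (ha : (a : ℤ) = m + ((n : ℤ) - 1)) :
    ∃ v : P b ⟶ 𝟙_ C, ψ a m ha ≫ f - ψ' a m ha ≫ f =
      eqToHom (congrArg P hab) ≫ dP b ≫ v := by
  obtain ⟨m, rfl⟩ := Nat.exists_eq_add_of_le' hm
  obtain ⟨n, rfl⟩ := Nat.exists_eq_add_of_le' hn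
  obtain rfl : b = n + m := by omega
  subst hab
  obtain ⟨hψ, η, hη, hμ⟩ := hψ
  obtain ⟨hψ', η', hη', hμ'⟩ := hψ'
  obtain ⟨r, hr, hr'⟩ := exists_comp_sub_comp_eq_comp_augmentation P dP hPP hproj μ hepi hex n g hg
    η η' (hη.trans hη'.symm)
  obtain ⟨s, hs, hs'⟩ : ∃ s : P n ⟶ P 0, dP n ≫ s = 0 ∧ ψ n 0 (by push_cast; ring) ≫ μ -
      (-1 : ℤ) ^ (n + 1 + 1) • (η n (n + 1) (by push_cast; ring) ≫ g) = s ≫ μ :=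
    hμ.exists_sub_eq_comp_augmentation hPP hproj μ hepi
  obtain ⟨s', hsd', hs''⟩ : ∃ s : P n ⟶ P 0, dP n ≫ s = 0 ∧ ψ' n 0 (by push_cast; ring) ≫ μ -
      (-1 : ℤ) ^ (n + 1 + 1) • (η' n (n + 1) (by push_cast; ring) ≫ g) = s ≫ μ :=
    hμ'.exists_sub_eq_comp_augmentation hPP hproj μ hepi
  have hD (j : ℕ) := congrFun (congrFun (congrFun (hψ.trans hψ'.symm) (n + j + 1)) j)
    (by push_cast; ring)
  have := hproj n
  let z : P n ⟶ P 0 := s - s' + (-1 : ℤ) ^ (n + 1 + 1) • r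
  have hz : dP n ≫ z = 0 := by
    simp only [z, Preadditive.comp_add, Preadditive.comp_sub, Linear.comp_smul, hs, hsd', hr]
    simp
  obtain ⟨t, ht⟩ := exists_factor_of_image_eq_kernel _ _ hμd hex0
    (ψ n 0 (by push_cast; ring) - ψ' n 0 (by push_cast; ring) - z) (by
      simp only [z, Preadditive.sub_comp, Preadditive.add_comp, Linear.smul_comp, ← hs', ← hs'',
        ← hr', smul_sub]
      abel)
  obtain ⟨v, hv⟩ := exists_comp_cocycle_eq_coboundary (X := fun j => P (n + j))
    (fun j => dP (n + j)) dP (fun j => hPP (n + j)) hPP (fun j => hproj (n + j)) hex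
    (fun j => ψ (n + j) j (by push_cast; ring) - ψ' (n + j) j (by push_cast; ring))
    ((((n + 1 : ℕ) : ℤ) - 1).negOnePow : ℤ)
    (fun j => by
      have hj := hD j
      simp only [pdel] at hj
      rw [← sub_eq_zero, sub_sub_sub_comm] at hj
      rw [← sub_eq_zero]
      simpa only [Preadditive.sub_comp, Preadditive.comp_sub, smul_sub] using! hj)
    ⟨t, by
      have := congrArg (dP n ≫ ·) ht
      simp only [Preadditive.comp_sub, hz, sub_zero] at this
      simpa only [Preadditive.comp_sub] using! this⟩ m f hf
  refine ⟨v, ?_⟩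
  rw [eqToHom_refl, Category.id_comp, ← hv, Preadditive.sub_comp]
  rfl

theorem stmt10 (P : ℕ → C) (dP : ∀ i, P (i + 1) ⟶ P i)
    -- `(P, dP, μ)` is a projective resolution of `𝟙`
    (hPP : ∀ i, dP (i + 1) ≫ dP i = 0)
    (hproj : ∀ i, Projective (P i))
    (μ : P 0 ⟶ 𝟙_ C) (hμd : dP 0 ≫ μ = 0) (hepi : Epi μ)
    (hex0 : imageSubobject (dP 0) = kernelSubobject μ)
    (hex : ∀ i, imageSubobject (dP (i + 1)) = kernelSubobject (dP i))
    -- `Δ : P ⟶ P ⊗ P` is a morphism of resolutions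
    (Δ : ∀ i, P i ⟶ tOb P P i)
    (hΔd : ∀ i, Δ (i + 1) ≫ tD P dP i = dP i ≫ Δ i)
    (hΔμ : Δ 0 ≫ tAug P μ = μ)
    -- `f` is a degree `m` cocycle and `g` a degree `n` cocycle, `m, n ≥ 1`
    (m n : ℕ) (hm : 1 ≤ m) (hn : 1 ≤ n)
    (f : P m ⟶ 𝟙_ C) (hf : dP m ≫ f = 0)
    (g : P n ⟶ 𝟙_ C) (hg : dP n ≫ g = 0)
    -- `ψf, ψ'f` are homotopy liftings of `(f, Δ)` and `ψg, ψ'g` of `(g, Δ)`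
    (ψf ψ'f : DH P P ((m : ℤ) - 1))
    (hψf : IsHomotopyLifting P dP μ Δ m hm f ψf)
    (hψ'f : IsHomotopyLifting P dP μ Δ m hm f ψ'f)
    (ψg ψ'g : DH P P ((n : ℤ) - 1))
    (hψg : IsHomotopyLifting P dP μ Δ n hn g ψg)
    (hψ'g : IsHomotopyLifting P dP μ Δ n hn g ψ'g) :
    -- then the two cochain-level brackets differ by a coboundary `v ∘ d_{m+n-2}`
    ∃ v : P (m + n - 2) ⟶ 𝟙_ C,
      (ψg (m + n - 1) m (by omega) ≫ f -
        ((-1 : ℤ) ^ ((m - 1) * (n - 1))) • (ψf (m + n - 1) n (by omega) ≫ g)) -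
      (ψ'g (m + n - 1) m (by omega) ≫ f -
        ((-1 : ℤ) ^ ((m - 1) * (n - 1))) • (ψ'f (m + n - 1) n (by omega) ≫ g)) =
      eqToHom (congrArg P (show m + n - 1 = (m + n - 2) + 1 by omega)) ≫
        dP (m + n - 2) ≫ v := by
  obtain ⟨v, hv⟩ := hψg.exists_comp_sub_comp_eq_coboundary P dP hPP hproj μ hμd hepi hex0 hex Δ m n
    hm hn f hf g hg ψg ψ'g hψ'g (m + n - 1) (m + n - 2) (by omega) (by omega)
  obtain ⟨w, hw⟩ := hψf.exists_comp_sub_comp_eq_coboundary P dP hPP hproj μ hμd hepi hex0 hex Δ n m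
    hn hm g hg f hf ψf ψ'f hψ'f (m + n - 1) (m + n - 2) (by omega) (by omega)
  refine ⟨v - (-1 : ℤ) ^ ((m - 1) * (n - 1)) • w, ?_⟩
  simp only [Preadditive.comp_sub, Linear.comp_smul, ← hv, ← hw, smul_sub]
  abel
end

section
/- Let C be an abelian monoidal category with unit 𝟙 whose tensor product is additive in each variable, let (P,d,μ_P) be a projective 2-power flat resolution of 𝟙, and let Δ_P, Δ'_P : P ⟶ P⊗P be two morphisms of resolutions. Let f be a degree m cocycle and g a degree n cocycle (m, n ≥ 1); let ψ_f, ψ_g be homotopy liftings of (f,Δ_P), (g,Δ_P), and let ψ'_f, ψ'_g be homotopy liftings of (f,Δ'_P), (g,Δ'_P). Then the cocycles f∘ψ_g − (−1)^{(m−1)(n−1)} g∘ψ_f and f∘ψ'_g − (−1)^{(m−1)(n−1)} g∘ψ'_f are cohomologous, i.e. their difference is a coboundary. -/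
/-!
STATEMENT 11: for a projective 2-power flat resolution `P` of `𝟙`, the cohomology class
of the bracket `[f,g] = f ψ_g - (-1)^{(m-1)(n-1)} g ψ_f` does not depend on the choice
of the diagonal map `Δ_P` (the `Δ_P`-independence part of the paper's Theorem 4.11).
-/

open CategoryTheory CategoryTheory.Limits CategoryTheory.MonoidalCategory

universe v u

attribute [local instance] CategoryTheory.Abelian.hasFiniteBiproducts

variable {C : Type u} [Category.{v} C] [Abelian C] [MonoidalCategory C] [MonoidalPreadditive C]

set_option linter.unusedSectionVars false

section Contractions

variable {P : ℕ → C} {dP : ∀ i, P (i + 1) ⟶ P i}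

lemma contract_left_comp_differential {A : C} (f : A ⟶ 𝟙_ C) {r s j : ℕ}
    (hr : r = j) (hs : s = r + 1) :
    eqToHom (show A ⊗ P s = A ⊗ P (r + 1) by rw [hs]) ≫ (A ◁ dP r) ≫
        (f ▷ P r) ≫ (λ_ (P r)).hom ≫ eqToHom (congrArg P hr) =
      (f ▷ P s) ≫ (λ_ (P s)).hom ≫
        eqToHom (congrArg P (show s = j + 1 by omega)) ≫ dP j := by
  subst hr hs
  simp only [eqToHom_refl, Category.id_comp, Category.comp_id]
  rw [← Category.assoc, whisker_exchange, Category.assoc, id_whiskerLeft]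
  simp

lemma contract_right_comp_differential {m r s j : ℕ} (f : P m ⟶ 𝟙_ C)
    (hr : r = m) (hs : s = r) :
    eqToHom (show P (j + 1) ⊗ P s = P (j + 1) ⊗ P r by rw [hs]) ≫ (dP j ▷ P r) ≫
        (P j ◁ (eqToHom (congrArg P hr) ≫ f)) ≫ (ρ_ (P j)).hom =
      (P (j + 1) ◁ (eqToHom (congrArg P (hs.trans hr)) ≫ f)) ≫ (ρ_ (P (j + 1))).hom ≫ dP j := by
  subst hs hr
  simp only [eqToHom_refl, Category.id_comp]
  rw [← Category.assoc, ← whisker_exchange, Category.assoc, whiskerRight_id]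
  simp

lemma differential_comp_cocycle {m r : ℕ} {f : P m ⟶ 𝟙_ C} (hf : dP m ≫ f = 0) (hr : r = m) :
    dP r ≫ eqToHom (congrArg P hr) ≫ f = 0 := by
  subst hr
  simpa using hf

lemma tD_comp_cFst_s11 {m : ℕ} {f : P m ⟶ 𝟙_ C} (hf : dP m ≫ f = 0) {i j : ℕ} (h : i = j + m) :
    tD P dP i ≫ cFst P P f i j h =
      ((-1 : ℤ) ^ m) • (cFst P P f (i + 1) (j + 1) (by omega) ≫ dP j) := by
  apply biproduct.hom_ext'
  intro a
  obtain ⟨a, ha⟩ := a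
  simp only [tD, cFst, biproduct.ι_matrix_assoc, biproduct.lift_π_assoc, Category.assoc,
    Preadditive.comp_zsmul, biproduct.ι_π_assoc, Preadditive.add_comp]
  by_cases h1 : a = m
  · subst h1
    simp only [dite_true, Nat.left_eq_add, one_ne_zero, dite_false, zero_comp, zero_add,
      Preadditive.zsmul_comp, Category.assoc, eqToHom_refl, Category.id_comp]
    rw [contract_left_comp_differential f (by omega) (by omega)]
  · by_cases h2 : a = m + 1
    · subst h2
      have : (dP m ▷ P (i - m)) ≫ (f ▷ P (i - m)) = 0 := by
        rw [← comp_whiskerRight, hf, MonoidalPreadditive.zero_whiskerRight]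
      simp [reassoc_of% this]
    · simp [h1, h2]

lemma tD_comp_cSnd_s11 {m : ℕ} {f : P m ⟶ 𝟙_ C} (hf : dP m ≫ f = 0) {i j : ℕ} (h : i = j + m) :
    tD P dP i ≫ cSnd P P f i j h =
      ((-1 : ℤ) ^ m) • (cSnd P P f (i + 1) (j + 1) (by omega) ≫ dP j) := by
  apply biproduct.hom_ext'
  intro a
  obtain ⟨a, ha⟩ := a
  simp only [tD, cSnd, biproduct.ι_matrix_assoc, biproduct.lift_π_assoc, Category.assoc,
    Preadditive.comp_zsmul, Preadditive.zsmul_comp, biproduct.ι_π_assoc, Preadditive.add_comp]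
  by_cases h1 : a = j + 1
  · subst h1
    simp only [dite_true, Nat.add_eq_left, one_ne_zero, dite_false, zero_comp, add_zero,
      Category.assoc, eqToHom_refl, Category.id_comp]
    rw [contract_right_comp_differential f (by omega) (by omega), smul_smul, ← pow_add]
    congr 1
    rw [show m + m * (j + 1) = m * j + 2 * m by ring, pow_add, pow_mul _ 2 m]
    simp
  · by_cases h2 : a = j
    · subst h2
      have : (P a ◁ dP (i - a)) ≫
          (P a ◁ (eqToHom (congrArg P (show i - a = m by omega)) ≫ f)) = 0 := by
        rw [← whiskerLeft_comp, differential_comp_cocycle hf (by omega),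
          MonoidalPreadditive.whiskerLeft_zero]
      simp only [dite_true, dite_false, zero_comp, zero_add, Category.assoc,
        Preadditive.zsmul_comp, reassoc_of% this, comp_zero, smul_zero, h1,
        Fin.mk.injEq]
    · simp [h1, h2]

/-- The pairing `f ⊗ g : (P ⊗ P)_{m + n} ⟶ 𝟙` without Koszul sign. -/
noncomputable def tensorPairing {m n : ℕ} (f : P m ⟶ 𝟙_ C) (g : P n ⟶ 𝟙_ C) (i : ℕ)
    (h : i = m + n) : tOb P P i ⟶ 𝟙_ C :=
  biproduct.π (fun a : Fin (i + 1) => P a.1 ⊗ P (i - a.1)) ⟨m, by omega⟩ ≫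
    (f ⊗ₘ (eqToHom (congrArg P (show i - m = n by omega)) ≫ g)) ≫ (λ_ (𝟙_ C)).hom

lemma cFst_comp {m n : ℕ} (f : P m ⟶ 𝟙_ C) (g : P n ⟶ 𝟙_ C) {i : ℕ} (h : i = n + m) :
    cFst P P f i n h ≫ g = tensorPairing f g i (by omega) := by
  simp only [cFst, tensorPairing, Category.assoc, MonoidalCategory.tensorHom_def,
    leftUnitor_naturality]

lemma cSnd_comp {m n : ℕ} (f : P m ⟶ 𝟙_ C) (g : P n ⟶ 𝟙_ C) {i : ℕ} (h : i = m + n) :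
    cSnd P P g i m h ≫ f = ((-1 : ℤ) ^ (n * m)) • tensorPairing f g i h := by
  simp only [cSnd, tensorPairing, Category.assoc, tensorHom_def', Preadditive.zsmul_comp,
    unitors_equal, rightUnitor_naturality]

/-- The contraction `f ⊗ 1 - 1 ⊗ f : (P ⊗ P)_i ⟶ P_j`. -/
noncomputable def contractionDiff {m : ℕ} (f : P m ⟶ 𝟙_ C) (i j : ℕ) (h : i = j + m) :
    tOb P P i ⟶ P j :=
  cFst P P f i j h - cSnd P P f i j h

lemma tD_comp_contractionDiff {m : ℕ} {f : P m ⟶ 𝟙_ C} (hf : dP m ≫ f = 0) {i j : ℕ}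
    (h : i = j + m) :
    tD P dP i ≫ contractionDiff f i j h =
      ((-1 : ℤ) ^ m) • (contractionDiff f (i + 1) (j + 1) (by omega) ≫ dP j) := by
  simp only [contractionDiff, Preadditive.comp_sub, Preadditive.sub_comp, tD_comp_cFst_s11 hf,
    tD_comp_cSnd_s11 hf, smul_sub]

lemma contractionDiff_comp {m n : ℕ} (f : P m ⟶ 𝟙_ C) (g : P n ⟶ 𝟙_ C) {i : ℕ}
    (h : i = n + m) :
    contractionDiff f i n h ≫ g =
      tensorPairing f g i (by omega) - ((-1 : ℤ) ^ (m * n)) • tensorPairing g f i h := by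
  simp only [contractionDiff, Preadditive.sub_comp, cFst_comp, cSnd_comp]

end Contractions

section Coboundaries

variable {E : ℕ → C} {X Y : C}

/-- Precomposition of a cochain on `E_{i-1}` with the differential `E_i ⟶ E_{i-1}` (zero if `i = 0`). -/
def preDiff (dE : ∀ i, E (i + 1) ⟶ E i) :
    ∀ i : ℕ, (∀ k, i = k + 1 → (E k ⟶ X)) → (E i ⟶ X)
  | 0, _ => 0
  | k + 1, a => dE k ≫ a k rfl

variable {dE : ∀ i, E (i + 1) ⟶ E i}

lemma preDiff_comp (i : ℕ) (a : ∀ k, i = k + 1 → (E k ⟶ X)) (t : X ⟶ Y) :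
    preDiff dE i a ≫ t = preDiff dE i fun k hk => a k hk ≫ t := by
  cases i <;> simp [preDiff]

lemma preDiff_add (i : ℕ) (a b : ∀ k, i = k + 1 → (E k ⟶ X)) :
    preDiff dE i (fun k hk => a k hk + b k hk) = preDiff dE i a + preDiff dE i b := by
  cases i <;> simp [preDiff]

lemma preDiff_zsmul (i : ℕ) (c : ℤ) (a : ∀ k, i = k + 1 → (E k ⟶ X)) :
    preDiff dE i (fun k hk => c • a k hk) = c • preDiff dE i a := by
  cases i <;> simp [preDiff]

lemma preDiff_sub (i : ℕ) (a b : ∀ k, i = k + 1 → (E k ⟶ X)) :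
    preDiff dE i (fun k hk => a k hk - b k hk) = preDiff dE i a - preDiff dE i b := by
  cases i <;> simp [preDiff]

lemma preDiff_preDiff (hdE : ∀ i, dE (i + 1) ≫ dE i = 0) (i : ℕ)
    (a : ∀ k, i = k + 1 → ∀ l, k = l + 1 → (E l ⟶ X)) :
    preDiff dE i (fun k hk => preDiff dE k (a k hk)) = 0 := by
  rcases i with _ | _ | i
  · simp [preDiff]
  · simp [preDiff]
  · simp [preDiff, reassoc_of% (hdE i)]

/-- A cochain `u : E_i ⟶ X` is a coboundary if it factors through the differential. -/
def IsCoboundary (dE : ∀ i, E (i + 1) ⟶ E i) (i : ℕ) (u : E i ⟶ X) : Prop :=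
  ∃ a, u = preDiff dE i a

lemma IsCoboundary.add {i : ℕ} {u v : E i ⟶ X} (hu : IsCoboundary dE i u)
    (hv : IsCoboundary dE i v) : IsCoboundary dE i (u + v) := by
  obtain ⟨a, rfl⟩ := hu
  obtain ⟨b, rfl⟩ := hv
  exact ⟨_, (preDiff_add i a b).symm⟩

lemma IsCoboundary.zsmul {i : ℕ} {u : E i ⟶ X} (hu : IsCoboundary dE i u) (c : ℤ) :
    IsCoboundary dE i (c • u) := by
  obtain ⟨a, rfl⟩ := hu
  exact ⟨_, (preDiff_zsmul i c a).symm⟩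

lemma IsCoboundary.sub {i : ℕ} {u v : E i ⟶ X} (hu : IsCoboundary dE i u)
    (hv : IsCoboundary dE i v) : IsCoboundary dE i (u - v) := by
  obtain ⟨a, rfl⟩ := hu
  obtain ⟨b, rfl⟩ := hv
  exact ⟨_, (preDiff_sub i a b).symm⟩

lemma IsCoboundary.exists_eq {i l : ℕ} {u : E i ⟶ X} (hu : IsCoboundary dE i u)
    (h : i = l + 1) : ∃ v : E l ⟶ X, u = eqToHom (congrArg E h) ≫ dE l ≫ v := by
  subst h
  obtain ⟨a, rfl⟩ := hu
  exact ⟨a l rfl, by simp [preDiff]⟩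

lemma homotopicToUnit.isCoboundary {k : ℕ} {u v : E k ⟶ 𝟙_ C}
    (h : homotopicToUnit E dE k u v) : IsCoboundary dE k (u - v) := by
  cases k with
  | zero =>
    refine ⟨fun _ h => absurd h (by omega), ?_⟩
    simpa [homotopicToUnit, preDiff, sub_eq_zero] using h
  | succ k =>
    obtain ⟨s, hs⟩ : ∃ s : E k ⟶ 𝟙_ C, u - v = ((-1 : ℤ) ^ (k + 1)) •
        (eqToHom rfl ≫ dE k ≫ s) := by
      rw [homotopicToUnit, dif_neg k.succ_ne_zero] at h
      exact h
    rw [hs]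
    refine IsCoboundary.zsmul ⟨fun l hl => eqToHom (congrArg E (by omega)) ≫ s, ?_⟩ _
    simp [preDiff]

variable {F : ℕ → C} {dF : ∀ i, F (i + 1) ⟶ F i}

lemma pdel_apply {n m : ℤ} (hm : m = n + 1) (f : DH E F n) (i j : ℕ) (h : (i : ℤ) = j + m) :
    pdel dE dF hm f i j h = f i (j + 1) (by push_cast; omega) ≫ dF j -
      (n.negOnePow : ℤ) • preDiff dE i fun k hk => f k j (by subst hk; push_cast at h; omega) := by
  cases i <;> rfl

lemma isCoboundary_pdel_comp {n m : ℤ} (hm : m = n + 1) (s : DH E F n) {i j : ℕ}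
    (h : (i : ℤ) = j + m) {f : F j ⟶ X} (hf : dF j ≫ f = 0) :
    IsCoboundary dE i (pdel dE dF hm s i j h ≫ f) := by
  rw [pdel_apply, Preadditive.sub_comp, Category.assoc, hf, comp_zero, zero_sub,
    Preadditive.zsmul_comp, preDiff_comp, ← neg_smul]
  exact IsCoboundary.zsmul ⟨_, rfl⟩ _

lemma pdel_sub {n m : ℤ} (hm : m = n + 1) (f g : DH E F n) :
    pdel dE dF hm (fun i j h => f i j h - g i j h) =
      fun i j h => pdel dE dF hm f i j h - pdel dE dF hm g i j h := by
  funext i j h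
  simp only [pdel_apply, Preadditive.sub_comp, preDiff_sub, smul_sub]
  abel

lemma pdel_add {n m : ℤ} (hm : m = n + 1) (f g : DH E F n) :
    pdel dE dF hm (fun i j h => f i j h + g i j h) =
      fun i j h => pdel dE dF hm f i j h + pdel dE dF hm g i j h := by
  funext i j h
  simp only [pdel_apply, Preadditive.add_comp, preDiff_add, smul_add]
  abel

end Coboundaries

section NullHomotopy

lemma exists_factor_of_image_eq_kernel_s11 {Q X Y Z : C} [Projective Q] {a : X ⟶ Y} {b : Y ⟶ Z}
    (hab : imageSubobject a = kernelSubobject b) (x : Q ⟶ Y) (hx : x ≫ b = 0) :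
    ∃ y : Q ⟶ X, y ≫ a = x := by
  have hfac : (imageSubobject a).Factors x := by
    rw [hab]
    exact kernelSubobject_factors b x hx
  refine ⟨Projective.factorThru ((imageSubobject a).factorThru x hfac)
    (factorThruImageSubobject a), ?_⟩
  have := Projective.factorThru_comp ((imageSubobject a).factorThru x hfac)
    (factorThruImageSubobject a)
  have := congrArg (· ≫ (imageSubobject a).arrow) this
  simpa only [Category.assoc, imageSubobject_arrow_comp, Subobject.factorThru_arrow] using this

lemma exists_seq_of_exists_succ {S : ℕ → Type*} (G : ∀ j, S j → Prop)
    (R : ∀ j, S j → S (j + 1) → Prop) (h0 : ∃ a, G 0 a)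
    (hsucc : ∀ j a, G j a → ∃ b, G (j + 1) b ∧ R j a b) :
    ∃ s : ∀ j, S j, ∀ j, R j (s j) (s (j + 1)) := by
  choose next hG hR using hsucc
  let t : ∀ j, {a : S j // G j a} := fun j =>
    Nat.rec ⟨h0.choose, h0.choose_spec⟩ (fun j a => ⟨next j a.1 a.2, hG j a.1 a.2⟩) j
  exact ⟨fun j => (t j).1, fun j => hR j (t j).1 (t j).2⟩

/-- A cycle in the complex of morphisms from a complex of projectives to a resolution of `A` is
a boundary as soon as its composite with the augmentation is a coboundary. -/
lemma exists_pdel_eq {E F : ℕ → C} {dE : ∀ i, E (i + 1) ⟶ E i} {dF : ∀ i, F (i + 1) ⟶ F i}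
    (hproj : ∀ i, Projective (E i)) (hdE : ∀ i, dE (i + 1) ≫ dE i = 0)
    {A : C} (ε : F 0 ⟶ A) [Epi ε]
    (hex0 : imageSubobject (dF 0) = kernelSubobject ε)
    (hex : ∀ i, imageSubobject (dF (i + 1)) = kernelSubobject (dF i))
    {p q n : ℤ} (hp : p = n + 1) (hq : n = q + 1) (φ : DH E F n)
    (hφ : ∀ i j h, pdel dE dF hp φ i j h = 0)
    (hε : ∀ i h, IsCoboundary dE i (φ i 0 h ≫ ε)) :
    ∃ s : DH E F q, pdel dE dF hq s = φ := by
  have hsign : ((n.negOnePow : ℤˣ) : ℤ) = -(q.negOnePow : ℤˣ) := by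
    rw [hq, Int.negOnePow_succ, Units.val_neg]
  have hsq : ((q.negOnePow : ℤˣ) : ℤ) * (q.negOnePow : ℤˣ) = 1 := by
    rw [← Units.val_mul, Int.units_mul_self, Units.val_one]
  let S : ℕ → Type _ := fun j => ∀ k : ℕ, (k : ℤ) = j + q → (E k ⟶ F j)
  let rhs : ∀ j, S j → ∀ i : ℕ, (i : ℤ) = j + n → (E i ⟶ F j) := fun j a i h =>
    φ i j h + (q.negOnePow : ℤ) •
      preDiff dE i fun k hk => a k (by subst hk; push_cast at h; omega)
  suffices hseq : ∃ s : ∀ j, S j, ∀ j i h,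
      s (j + 1) i (by push_cast; omega) ≫ dF j = rhs j (s j) i h by
    obtain ⟨s, hs⟩ := hseq
    refine ⟨fun i j h => s j i h, ?_⟩
    funext i j h
    rw [pdel_apply, hs j i h]
    simp [rhs]
  refine exists_seq_of_exists_succ (S := S)
    (fun j a => ∀ i h, ∃ b : E i ⟶ F (j + 1), b ≫ dF j = rhs j a i h)
    (fun j a b => ∀ i h, b i (by push_cast; omega) ≫ dF j = rhs j a i h) ?_ ?_
  · have hbase : ∀ (k : ℕ) (_ : (k : ℤ) = (0 : ℕ) + q), ∃ b : E k ⟶ F 0,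
        φ (k + 1) 0 (by push_cast; omega) ≫ ε = -(q.negOnePow : ℤ) • dE k ≫ b ≫ ε := by
      intro k hk
      obtain ⟨a, ha⟩ := hε (k + 1) (by push_cast; omega)
      refine ⟨-(q.negOnePow : ℤ) • Projective.factorThru (a k rfl) ε, ?_⟩
      rw [ha, Preadditive.zsmul_comp, Projective.factorThru_comp, Preadditive.comp_zsmul,
        smul_smul, neg_mul_neg, hsq, one_smul]
      rfl
    choose b hb using hbase
    refine ⟨b, fun i h => exists_factor_of_image_eq_kernel_s11 hex0 _ ?_⟩
    cases i with
    | zero =>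
      obtain ⟨a, ha⟩ := hε 0 h
      simpa [rhs, preDiff] using ha
    | succ k =>
      simp only [rhs, preDiff, Preadditive.add_comp, Preadditive.zsmul_comp, Category.assoc]
      rw [hb k (by push_cast at h ⊢; omega), neg_smul, neg_add_cancel]
  · intro j a ha
    choose b hb using ha
    refine ⟨fun i h => b i (by push_cast at h; omega), fun i h => ?_, fun i h => hb i h⟩
    refine exists_factor_of_image_eq_kernel_s11 (hex j) _ ?_
    have hφ' := hφ i j (by push_cast at h; omega)
    rw [pdel_apply, sub_eq_zero] at hφ'
    simp only [rhs, Preadditive.add_comp, Preadditive.zsmul_comp, preDiff_comp, hb, hφ',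
      preDiff_add, preDiff_zsmul, preDiff_preDiff hdE, smul_zero, add_zero, hsign, neg_smul,
      neg_add_cancel]

end NullHomotopy

section HomotopyLiftings

variable {P : ℕ → C} {dP : ∀ i, P (i + 1) ⟶ P i}

/-- Transport along a homotopy `h` from `Δ` to `Δ'`: the correction term
`(-1)^m (f ⊗ 1 - 1 ⊗ f) h`. -/
noncomputable def correction {m : ℕ} (f : P m ⟶ 𝟙_ C) (h : DH P (tOb P P) (-1)) {q : ℤ}
    (hq : (m : ℤ) = q + 1) : DH P P q :=
  fun i j hij => ((-1 : ℤ) ^ m) •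
    (h i (i + 1) (by push_cast; omega) ≫ contractionDiff f (i + 1) j (by omega))

lemma pdel_correction {m : ℕ} {f : P m ⟶ 𝟙_ C} (hf : dP m ≫ f = 0)
    (h : DH P (tOb P P) (-1)) {q : ℤ} (hq : (m : ℤ) = q + 1) (i j : ℕ) (hij : (i : ℤ) = j + m) :
    pdel dP dP hq (correction f h hq) i j hij =
      pdel dP (tD P dP) (show (0 : ℤ) = -1 + 1 by ring) h i i (by simp) ≫
        contractionDiff f i j (by omega) := by
  have hs : ((-1 : ℤ) ^ m) * (-1) ^ m = 1 := by
    rw [← mul_pow]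
    simp
  have hsq : ((q.negOnePow : ℤˣ) : ℤ) * (-1) ^ m = -1 := by
    have h1 : q = (m : ℤ) - 1 := by omega
    subst h1
    rw [Int.negOnePow_sub, Int.negOnePow_one, mul_neg, mul_one, Units.val_neg, neg_mul]
    rw [Int.negOnePow_def, zpow_natCast]
    push_cast
    rw [hs]
  rw [pdel_apply, pdel_apply, Preadditive.sub_comp, Category.assoc,
    tD_comp_contractionDiff hf, Preadditive.zsmul_comp, preDiff_comp, Preadditive.comp_zsmul]
  simp only [correction, preDiff_zsmul, smul_smul, hsq, Preadditive.zsmul_comp, Category.assoc]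
  congr 1
  cases i <;> simp [preDiff]

lemma correction_comp {m n : ℕ} (f : P m ⟶ 𝟙_ C) (g : P n ⟶ 𝟙_ C) (h : DH P (tOb P P) (-1))
    {q : ℤ} (hq : (m : ℤ) = q + 1) (i : ℕ) (hi : (i : ℤ) = n + q) :
    correction f h hq i n hi ≫ g = ((-1 : ℤ) ^ m) • (h i (i + 1) (by push_cast; omega) ≫
      (tensorPairing f g (i + 1) (by omega) -
        ((-1 : ℤ) ^ (m * n)) • tensorPairing g f (i + 1) (by omega))) := by
  simp only [correction, Preadditive.zsmul_comp, Category.assoc, contractionDiff_comp]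

variable {μ : P 0 ⟶ 𝟙_ C}

/-- Homotopy liftings for homotopic diagonals agree up to the correction term and a boundary. -/
lemma IsHomotopyLifting.isCoboundary_sub_comp (hPP : ∀ i, dP (i + 1) ≫ dP i = 0)
    (hproj : ∀ i, Projective (P i)) (hμd : dP 0 ≫ μ = 0) [Epi μ]
    (hex0 : imageSubobject (dP 0) = kernelSubobject μ)
    (hex : ∀ i, imageSubobject (dP (i + 1)) = kernelSubobject (dP i))
    {Δ Δ' : ∀ i, P i ⟶ tOb P P i} {h : DH P (tOb P P) (-1)}
    (hh : ∀ i, pdel dP (tD P dP) (show (0 : ℤ) = -1 + 1 by ring) h i i (by simp) = Δ' i - Δ i)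
    {m : ℕ} {hm : 1 ≤ m} {f : P m ⟶ 𝟙_ C} (hf : dP m ≫ f = 0)
    {ψ ψ' : DH P P ((m : ℤ) - 1)} (hψ : IsHomotopyLifting P dP μ Δ m hm f ψ)
    (hψ' : IsHomotopyLifting P dP μ Δ' m hm f ψ')
    {n : ℕ} {g : P n ⟶ 𝟙_ C} (hg : dP n ≫ g = 0) (i : ℕ) (hi : (i : ℤ) = n + (m - 1)) :
    IsCoboundary dP i (ψ' i n hi ≫ g -
      (ψ i n hi ≫ g + correction f h (by ring) i n hi ≫ g)) := by
  obtain ⟨hd, η, hη, hηψ⟩ := hψ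
  obtain ⟨hd', η', hη', hηψ'⟩ := hψ'
  obtain ⟨σ, hσ⟩ := exists_pdel_eq hproj hPP μ hex0 hex (show (0 : ℤ) = -1 + 1 by ring)
    (show (-1 : ℤ) = -2 + 1 by ring)
    (fun i j hij => η' i j hij - (η i j hij + correction μ h (by simp) i j hij))
    (fun i j hij => by
      rw [pdel_sub, pdel_add, hη, hη']
      have := pdel_correction hμd h (q := -1) (by simp) i j hij
      simp only [Nat.cast_zero] at this
      beta_reduce
      rw [this, hh]
      simp only [counitRHS, contractionDiff, Preadditive.sub_comp, Preadditive.comp_sub]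
      abel)
    (fun i hi => by omega)
  obtain ⟨τ, hτ⟩ := exists_pdel_eq hproj hPP μ hex0 hex
    (show (m : ℤ) = m - 1 + 1 by ring) (show (m : ℤ) - 1 = (m - 2) + 1 by ring)
    (fun i j hij => ψ' i j hij - (ψ i j hij + correction f h (by ring) i j hij))
    (fun i j hij => by
      rw [pdel_sub, pdel_add, hd, hd']
      simp only [pdel_correction hf, hh]
      simp only [liftRHS, contractionDiff, Preadditive.sub_comp, Preadditive.comp_sub]
      abel)
    (fun i hi => by
      obtain rfl : i = m - 1 := by omega
      have hσ' := isCoboundary_pdel_comp (dE := dP) (show (-1 : ℤ) = -2 + 1 by ring) σ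
        (i := m - 1) (by omega) hf
      rw [hσ] at hσ'
      have := (hηψ'.isCoboundary.sub hηψ.isCoboundary).add (hσ'.zsmul ((-1 : ℤ) ^ (m + 1)))
      convert this using 1
      simp only [Preadditive.sub_comp, Preadditive.add_comp, correction_comp, mul_zero, zero_mul,
        pow_zero, one_smul, smul_sub, smul_add, Preadditive.comp_sub, pow_succ, mul_neg, mul_one,
        neg_smul]
      abel)
  have := isCoboundary_pdel_comp (dE := dP) (show (m : ℤ) - 1 = (m - 2) + 1 by ring) τ hi hg
  rw [hτ] at this
  simpa only [Preadditive.sub_comp, Preadditive.add_comp] using this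

lemma exists_homotopy_of_diagonals (hPP : ∀ i, dP (i + 1) ≫ dP i = 0)
    (hproj : ∀ i, Projective (P i)) [Epi (tAug P μ)]
    (hflat0 : imageSubobject (tD P dP 0) = kernelSubobject (tAug P μ))
    (hflat : ∀ i, imageSubobject (tD P dP (i + 1)) = kernelSubobject (tD P dP i))
    {Δ Δ' : ∀ i, P i ⟶ tOb P P i}
    (hΔd : ∀ i, Δ (i + 1) ≫ tD P dP i = dP i ≫ Δ i) (hΔμ : Δ 0 ≫ tAug P μ = μ)
    (hΔ'd : ∀ i, Δ' (i + 1) ≫ tD P dP i = dP i ≫ Δ' i) (hΔ'μ : Δ' 0 ≫ tAug P μ = μ) :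
    ∃ h : DH P (tOb P P) (-1), ∀ i,
      pdel dP (tD P dP) (show (0 : ℤ) = -1 + 1 by ring) h i i (by simp) = Δ' i - Δ i := by
  obtain ⟨h, hh⟩ := exists_pdel_eq (F := tOb P P) hproj hPP (tAug P μ) hflat0 hflat
    (show (1 : ℤ) = 0 + 1 by ring) (show (0 : ℤ) = -1 + 1 by ring)
    (fun i j hij => (Δ' i - Δ i) ≫
      eqToHom (congrArg (tOb P P) (show i = j by omega)))
    (fun i j hij => by
      obtain rfl : i = j + 1 := by omega
      rw [pdel_apply]
      simp [preDiff, hΔd, hΔ'd])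
    (fun i hi => by
      obtain rfl : i = 0 := by omega
      refine ⟨fun _ hk => absurd hk (by omega), ?_⟩
      simp [preDiff, hΔμ, hΔ'μ])
  exact ⟨h, fun i => by rw [hh]; simp⟩

/-- The correction terms cancel in the bracket. -/
lemma correction_bracket {m n : ℕ} (hm : 1 ≤ m) (hn : 1 ≤ n) (f : P m ⟶ 𝟙_ C) (g : P n ⟶ 𝟙_ C)
    (h : DH P (tOb P P) (-1)) (i : ℕ) (hi : i + 1 = m + n) :
    correction g h (q := (n : ℤ) - 1) (by ring) i m (by omega) ≫ f =
      ((-1 : ℤ) ^ ((m - 1) * (n - 1))) •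
        (correction f h (q := (m : ℤ) - 1) (by ring) i n (by omega) ≫ g) := by
  obtain ⟨m, rfl⟩ := Nat.exists_eq_add_of_le' hm
  obtain ⟨n, rfl⟩ := Nat.exists_eq_add_of_le' hn
  simp only [correction_comp, Preadditive.comp_sub, Preadditive.comp_zsmul, smul_sub, smul_smul,
    Nat.add_sub_cancel]
  have hfg : ((-1 : ℤ) ^ (n + 1)) * (-1) ^ ((n + 1) * (m + 1)) =
      -((-1) ^ (m * n) * (-1) ^ (m + 1)) := by
    rw [show (n + 1) * (m + 1) = m * n + m + n + 1 by ring]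
    simp only [pow_add, pow_one]
    rcases neg_one_pow_eq_or ℤ n with hn | hn <;> simp [hn]
  have hgf : ((-1 : ℤ) ^ (m * n)) * ((-1) ^ (m + 1) * (-1) ^ ((m + 1) * (n + 1))) =
      -(-1) ^ (n + 1) := by
    rw [show (m + 1) * (n + 1) = m * n + m + n + 1 by ring]
    simp only [pow_add, pow_one]
    rcases neg_one_pow_eq_or ℤ m with hm | hm <;>
      rcases neg_one_pow_eq_or ℤ (m * n) with hmn | hmn <;> simp [hm, hmn]
  rw [hfg, hgf, neg_smul, neg_smul]
  abel

end HomotopyLiftings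

theorem stmt11 (P : ℕ → C) (dP : ∀ i, P (i + 1) ⟶ P i)
    -- `(P, dP, μ)` is a projective resolution of `𝟙`
    (hPP : ∀ i, dP (i + 1) ≫ dP i = 0)
    (hproj : ∀ i, Projective (P i))
    (μ : P 0 ⟶ 𝟙_ C) (hμd : dP 0 ≫ μ = 0) (hepi : Epi μ)
    (hex0 : imageSubobject (dP 0) = kernelSubobject μ)
    (hex : ∀ i, imageSubobject (dP (i + 1)) = kernelSubobject (dP i))
    -- `P` is 2-power flat: `P ⊗ P` with the augmentation `μ ⊗ μ` is again a resolution
    (hflatEpi : Epi (tAug P μ))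
    (hflatd : tD P dP 0 ≫ tAug P μ = 0)
    (hflat0 : imageSubobject (tD P dP 0) = kernelSubobject (tAug P μ))
    (hflat : ∀ i, imageSubobject (tD P dP (i + 1)) = kernelSubobject (tD P dP i))
    -- `Δ` and `Δ'` are two morphisms of resolutions `P ⟶ P ⊗ P`
    (Δ : ∀ i, P i ⟶ tOb P P i)
    (hΔd : ∀ i, Δ (i + 1) ≫ tD P dP i = dP i ≫ Δ i)
    (hΔμ : Δ 0 ≫ tAug P μ = μ)
    (Δ' : ∀ i, P i ⟶ tOb P P i)
    (hΔ'd : ∀ i, Δ' (i + 1) ≫ tD P dP i = dP i ≫ Δ' i)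
    (hΔ'μ : Δ' 0 ≫ tAug P μ = μ)
    -- `f` is a degree `m` cocycle and `g` a degree `n` cocycle, `m, n ≥ 1`
    (m n : ℕ) (hm : 1 ≤ m) (hn : 1 ≤ n)
    (f : P m ⟶ 𝟙_ C) (hf : dP m ≫ f = 0)
    (g : P n ⟶ 𝟙_ C) (hg : dP n ≫ g = 0)
    -- `ψf, ψg` are homotopy liftings with respect to `Δ`, and `ψ'f, ψ'g` w.r.t. `Δ'`
    (ψf : DH P P ((m : ℤ) - 1)) (hψf : IsHomotopyLifting P dP μ Δ m hm f ψf)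
    (ψg : DH P P ((n : ℤ) - 1)) (hψg : IsHomotopyLifting P dP μ Δ n hn g ψg)
    (ψ'f : DH P P ((m : ℤ) - 1)) (hψ'f : IsHomotopyLifting P dP μ Δ' m hm f ψ'f)
    (ψ'g : DH P P ((n : ℤ) - 1)) (hψ'g : IsHomotopyLifting P dP μ Δ' n hn g ψ'g) :
    -- then the two cochain-level brackets differ by a coboundary `v ∘ d_{m+n-2}`
    ∃ v : P (m + n - 2) ⟶ 𝟙_ C,
      (ψg (m + n - 1) m (by omega) ≫ f -
        ((-1 : ℤ) ^ ((m - 1) * (n - 1))) • (ψf (m + n - 1) n (by omega) ≫ g)) -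
      (ψ'g (m + n - 1) m (by omega) ≫ f -
        ((-1 : ℤ) ^ ((m - 1) * (n - 1))) • (ψ'f (m + n - 1) n (by omega) ≫ g)) =
      eqToHom (congrArg P (show m + n - 1 = (m + n - 2) + 1 by omega)) ≫
        dP (m + n - 2) ≫ v := by
  obtain ⟨h, hh⟩ := exists_homotopy_of_diagonals hPP hproj hflat0 hflat hΔd hΔμ hΔ'd hΔ'μ
  have hF := hψf.isCoboundary_sub_comp hPP hproj hμd hex0 hex hh hf hψ'f hg (m + n - 1) (by omega)
  have hG := hψg.isCoboundary_sub_comp hPP hproj hμd hex0 hex hh hg hψ'g hf (m + n - 1) (by omega)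
  have hcorr := correction_bracket hm hn f g h (m + n - 1) (by omega)
  refine IsCoboundary.exists_eq ?_ (show m + n - 1 = (m + n - 2) + 1 by omega)
  convert (hF.zsmul ((-1 : ℤ) ^ ((m - 1) * (n - 1)))).sub hG using 1
  rw [hcorr]
  simp only [smul_sub, smul_add]
  abel
end
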